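/- ('Largest' formulation of the paper's Theorem 1.) Let α be a type of atomic propositions and let (ŝ_i)_{i∈I} = ((s_i⁺, s_i⁻))_{i∈I} be a family of partial states over α with I nonempty and each partial state consistent (s_i⁺ ∩ s_i⁻ = ∅). Let T be any set of atomic propositions such that every p ∈ T is fully determined by the DNF (all valuations satisfying the DNF agree on the value of p). Then T ⊆ (⋂_{i∈I} s_i⁺) ∪ (⋂_{i∈I} s_i⁻); that is, the collapsed set contains every set of propositions fully determined by the DNF. -/

import Mathlib

/-- A valuation `v` satisfies the partial state `(s⁺, s⁻)` if every atom in `s⁺`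
is true under `v` and every atom in `s⁻` is false under `v`. -/
def Satisfies {α : Type*} (v : α → Bool) (s : Set α × Set α) : Prop :=
  (∀ p ∈ s.1, v p = true) ∧ (∀ q ∈ s.2, v q = false)

/-! The valuations satisfying a partial state `(s⁺, s⁻)` are the indicators of the sets between
`s⁺` and the complement of `s⁻`. If `p ∉ sᵢ⁺` and `p ∉ sⱼ⁻`, the least valuation satisfying `sᵢ`
and the greatest one satisfying `sⱼ` disagree on `p`, so `p` is not fully determined. -/

section PartialState

variable {α : Type*} {s : Set α × Set α}

theorem satisfies_decide_mem_iff {A : Set α} [DecidablePred (· ∈ A)] :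
    Satisfies (fun p => decide (p ∈ A)) s ↔ A ∈ Set.Icc s.1 s.2ᶜ := by
  rw [Set.mem_Icc, le_compl_comm]
  simp only [Satisfies, decide_eq_true_eq, decide_eq_false_iff_not, Set.subset_def,
    Set.mem_compl_iff]

theorem satisfies_decide_mem_fst [DecidablePred (· ∈ s.1)] (hs : Disjoint s.1 s.2) :
    Satisfies (fun p => decide (p ∈ s.1)) s :=
  satisfies_decide_mem_iff.2 (Set.left_mem_Icc.2 hs.le_compl_right)

theorem satisfies_decide_mem_compl_snd [DecidablePred (· ∈ s.2ᶜ)] (hs : Disjoint s.1 s.2) :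
    Satisfies (fun p => decide (p ∈ s.2ᶜ)) s :=
  satisfies_decide_mem_iff.2 (Set.right_mem_Icc.2 hs.le_compl_right)

end PartialState

theorem stmt_10 {α : Type*} {I : Type*} [Nonempty I] (sp sn : I → Set α)
    (hcons : ∀ i, sp i ∩ sn i = ∅) (T : Set α)
    (hT : ∀ p ∈ T, ∀ v w : α → Bool,
        (∃ i, Satisfies v (sp i, sn i)) → (∃ i, Satisfies w (sp i, sn i)) →
        v p = w p) :
    T ⊆ (⋂ i, sp i) ∪ (⋂ i, sn i) := by
  classical
  intro p hpT
  by_contra hp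
  simp only [Set.mem_union, Set.mem_iInter, not_or, not_forall] at hp
  obtain ⟨⟨i, hpi⟩, ⟨j, hpj⟩⟩ := hp
  have hdisj (k : I) : Disjoint (sp k) (sn k) := Set.disjoint_iff_inter_eq_empty.2 (hcons k)
  have hagree : decide (p ∈ sp i) = decide (p ∈ (sn j)ᶜ) :=
    hT p hpT _ _ ⟨i, satisfies_decide_mem_fst (hdisj i)⟩
      ⟨j, satisfies_decide_mem_compl_snd (hdisj j)⟩
  exact hpi ((decide_eq_decide.1 hagree).2 hpj)
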